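/- Let p and q be integers with 4 < p < q and p not dividing q; write q = kp + r with k ≥ 1 and 0 < r < p, and set m = gcd(p,q), ν = (p−1)(q−1) and ν' = (p−1)(kp−1). Then every integer n with 1 ≤ n ≤ ν is attainable from T = {(p,0),(0,q)}, with the possible exception of: integers n with ν − m < n < ν; integers n with ν' − (p−1) < n < ν'; the integer n = ν − p in case p is even and r = p−1; and the integer n = ν' − (2p−1) in case p is even. -/

import Mathlib

open Pointwise MeasureTheory

/-- The Newton polyhedron `Γ₊(T)`: the Minkowski sum of the convex hull of the
(real images of the) lattice points of `T` with the nonnegative quadrant. -/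
noncomputable def GammaPlus (T : Finset (ℕ × ℕ)) : Set (ℝ × ℝ) :=
  convexHull ℝ ((fun v : ℕ × ℕ => ((v.1 : ℝ), (v.2 : ℝ))) '' (T : Set (ℕ × ℕ))) +
    {v : ℝ × ℝ | 0 ≤ v.1 ∧ 0 ≤ v.2}

/-- `a(T)`: the smallest `x` with `(x,0) ∈ Γ₊(T)`. -/
noncomputable def axisA (T : Finset (ℕ × ℕ)) : ℝ :=
  sInf {x : ℝ | (x, (0 : ℝ)) ∈ GammaPlus T}

/-- `b(T)`: the smallest `y` with `(0,y) ∈ Γ₊(T)`. -/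
noncomputable def axisB (T : Finset (ℕ × ℕ)) : ℝ :=
  sInf {y : ℝ | ((0 : ℝ), y) ∈ GammaPlus T}

/-- `S(T)`: the Lebesgue area of the part of the nonnegative quadrant not in `Γ₊(T)`. -/
noncomputable def areaS (T : Finset (ℕ × ℕ)) : ℝ :=
  (volume ({v : ℝ × ℝ | 0 ≤ v.1 ∧ 0 ≤ v.2} \ GammaPlus T)).toReal

/-- The Newton number `ν(T) = 2 S(T) - a(T) - b(T) + 1`. -/
noncomputable def newtonNumber (T : Finset (ℕ × ℕ)) : ℝ :=
  2 * areaS T - axisA T - axisB T + 1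

/-- An integer `n` is attainable from `T` if `n = ν(T ∪ P)` for some finite `P ⊆ ℕ²`. -/
def Attainable (T : Finset (ℕ × ℕ)) (n : ℤ) : Prop :=
  ∃ P : Finset (ℕ × ℕ), (n : ℝ) = newtonNumber (T ∪ P)

/-!
Encode a lattice polygon from `(0, V)` to `(U, 0)` by the list of its edges. Its Newton number is
`(U - 1) (V - 1) - d`, where the defect `d` is the sum of `|det (e, f)|` over all pairs of edges,
because twice the area below the polygon is `U V - d`. The defect is invariant under unimodular
maps, and a Euclid-type induction shows that every `d` with `gcd s t ≤ d ≤ s t` is the defect of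
some polygon inside the triangle with legs `s` and `t`.

In the box `(p, k p + r)` with `p = r + t`, consider the corner with `r` edges of slope `k + 1` and
`t` edges of slope `k`. It is unimodularly equivalent to the triangle with legs `r` and `t`, so its
defects fill an interval of length `r t`. This interval overlaps the one for `r - 1`, so these
intervals together cover `[ν', ν]`, apart from the exceptions below `ν`. The values below `ν'` come
from smaller `k`; the gaps left just below each value of `(p - 1) (k p - 1)` are filled by a
different corner in a slightly taller box, and the case `k = 1` is an induction on `p`.
-/

/-! ### The defect of a list of edges -/

section Defect

/-- The determinant of two lattice vectors. An edge of a Newton polygon that goes `u` to the right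
and `v` down is encoded as the vector `(u, v)`, so `latticeDet e f ≤ 0` says that `e` is at least
as steep as `f`. -/
def latticeDet (e f : ℕ × ℕ) : ℤ := e.1 * f.2 - e.2 * f.1

/-- The defect of a list of edges, the sum of `|latticeDet e f|` over all pairs: twice the area
between the triangle spanned by the sum of the edges and the convex polygon with these edges. -/
def defect : List (ℕ × ℕ) → ℤ
  | [] => 0
  | e :: E => (E.map fun f => |latticeDet e f|).sum + defect E

/-- The defects of the lists of edges taken from `A` whose sum is `v`. -/
def defectSet (A : Set (ℕ × ℕ)) (v : ℕ × ℕ) : Set ℤ :=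
  {d | ∃ E : List (ℕ × ℕ), (∀ e ∈ E, e ∈ A) ∧ E.sum = v ∧ defect E = d}

lemma neg_latticeDet (e f : ℕ × ℕ) : -latticeDet e f = latticeDet f e := by
  simp only [latticeDet]; ring

lemma abs_latticeDet_comm (e f : ℕ × ℕ) : |latticeDet e f| = |latticeDet f e| := by
  rw [← neg_latticeDet, abs_neg]

lemma sum_map_latticeDet (e : ℕ × ℕ) (E : List (ℕ × ℕ)) :
    (E.map (latticeDet e)).sum = latticeDet e E.sum := by
  induction E with
  | nil => simp [latticeDet]
  | cons f E ih =>
    simp only [List.map_cons, List.sum_cons, ih, latticeDet, Prod.fst_add, Prod.snd_add,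
      Nat.cast_add]
    ring

lemma sum_map_abs_latticeDet_of_nonneg {e : ℕ × ℕ} {E : List (ℕ × ℕ)}
    (h : ∀ f ∈ E, 0 ≤ latticeDet e f) :
    (E.map fun f => |latticeDet e f|).sum = latticeDet e E.sum := by
  rw [List.map_congr_left fun f hf => abs_of_nonneg (h f hf), sum_map_latticeDet]

lemma sum_map_abs_latticeDet_of_nonpos {e : ℕ × ℕ} {E : List (ℕ × ℕ)}
    (h : ∀ f ∈ E, latticeDet e f ≤ 0) :
    (E.map fun f => |latticeDet e f|).sum = -latticeDet e E.sum := by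
  rw [List.map_congr_left fun f hf => abs_of_nonpos (h f hf), ← sum_map_latticeDet,
    List.sum_neg, List.map_map]
  rfl

lemma defect_perm {E F : List (ℕ × ℕ)} (h : E.Perm F) : defect E = defect F := by
  induction h with
  | nil => rfl
  | cons e h ih => rw [defect, defect, ih, (h.map _).sum_eq]
  | swap e f E =>
    simp only [defect, List.map_cons, List.sum_cons, abs_latticeDet_comm f e]
    ring
  | trans _ _ h₁ h₂ => exact h₁.trans h₂

variable {A B : Set (ℕ × ℕ)} {d : ℤ} {s t : ℕ}

lemma defect_map {φ : ℕ × ℕ →+ ℕ × ℕ}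
    (hφ : ∀ e f, |latticeDet (φ e) (φ f)| = |latticeDet e f|) (E : List (ℕ × ℕ)) :
    defect (E.map φ) = defect E := by
  induction E with
  | nil => rfl
  | cons e E ih => simp only [List.map_cons, defect, ih, List.map_map, Function.comp_def, hφ]

lemma map_mem_defectSet {φ : ℕ × ℕ →+ ℕ × ℕ}
    (hφ : ∀ e f, |latticeDet (φ e) (φ f)| = |latticeDet e f|) (hAB : Set.MapsTo φ A B)
    {v : ℕ × ℕ} (hd : d ∈ defectSet A v) : d ∈ defectSet B (φ v) := by
  obtain ⟨E, hA, rfl, rfl⟩ := hd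
  refine ⟨E.map φ, fun e he => ?_, (map_list_sum φ E).symm, defect_map hφ E⟩
  obtain ⟨f, hf, rfl⟩ := List.mem_map.1 he
  exact hAB (hA f hf)

lemma swap_mem_defectSet (hAB : Set.MapsTo Prod.swap A B) (hd : d ∈ defectSet A (s, t)) :
    d ∈ defectSet B (t, s) :=
  map_mem_defectSet (φ := (AddEquiv.prodComm : ℕ × ℕ ≃+ ℕ × ℕ).toAddMonoidHom)
    (fun e f => by
      rw [abs_latticeDet_comm]
      simp [latticeDet, mul_comm]) hAB hd

/-- The shear `(x, y) ↦ (x, y + c x)`, which adds `c` to the slope of every edge. -/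
def shear (c : ℕ) : ℕ × ℕ →+ ℕ × ℕ :=
  (AddMonoidHom.fst ℕ ℕ).prod (AddMonoidHom.snd ℕ ℕ + c • AddMonoidHom.fst ℕ ℕ)

@[simp]
lemma shear_apply (c : ℕ) (e : ℕ × ℕ) : shear c e = (e.1, e.2 + c * e.1) := rfl

lemma latticeDet_shear (c : ℕ) (e f : ℕ × ℕ) :
    latticeDet (shear c e) (shear c f) = latticeDet e f := by
  simp only [latticeDet, shear_apply, Nat.cast_add, Nat.cast_mul]
  ring

lemma shear_mem_defectSet (c : ℕ) (hAB : Set.MapsTo (shear c) A B)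
    (hd : d ∈ defectSet A (s, t)) : d ∈ defectSet B (s, t + c * s) :=
  map_mem_defectSet (fun e f => by rw [latticeDet_shear]) hAB hd

lemma singleton_mem_defectSet (h : (s, t) ∈ A) : 0 ∈ defectSet A (s, t) :=
  ⟨[(s, t)], by simpa using h, by simp, by simp [defect]⟩

lemma pair_mem_defectSet {e f : ℕ × ℕ} (he : e ∈ A) (hf : f ∈ A) (hs : e.1 + f.1 = s)
    (ht : e.2 + f.2 = t) (hd : |latticeDet e f| = d) : d ∈ defectSet A (s, t) :=
  ⟨[e, f], by simp [he, hf], by ext <;> simp [hs, ht], by simp [defect, hd]⟩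

lemma add_horizontal_mem_defectSet {w : ℕ} (hw : (w, 0) ∈ A) (hd : d ∈ defectSet A (s, t)) :
    d + w * t ∈ defectSet A (s + w, t) := by
  obtain ⟨E, hA, hsum, rfl⟩ := hd
  refine ⟨(w, 0) :: E, by simpa [hw] using hA, by simp [hsum, add_comm], ?_⟩
  have hnonneg : ∀ f ∈ E, 0 ≤ latticeDet (w, 0) f := fun f _ => by
    simp only [latticeDet, Nat.cast_zero, zero_mul, sub_zero]
    positivity
  rw [defect, sum_map_abs_latticeDet_of_nonneg hnonneg, hsum]
  simp [latticeDet, add_comm]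

lemma add_vertical_mem_defectSet {w : ℕ} (hw : (0, w) ∈ A) (hd : d ∈ defectSet A (s, t)) :
    d + w * s ∈ defectSet A (s, t + w) := by
  obtain ⟨E, hA, hsum, rfl⟩ := hd
  refine ⟨(0, w) :: E, by simpa [hw] using hA, by simp [hsum, add_comm], ?_⟩
  have hnonpos : ∀ f ∈ E, latticeDet (0, w) f ≤ 0 := fun f _ => by
    simp only [latticeDet, Nat.cast_zero, zero_mul, zero_sub, Left.neg_nonpos_iff]
    positivity
  rw [defect, sum_map_abs_latticeDet_of_nonpos hnonpos, hsum]
  simp [latticeDet, add_comm]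

end Defect

section NonzeroEdges

lemma mapsTo_shear_ne_zero (c : ℕ) : Set.MapsTo (shear c) {0}ᶜ {0}ᶜ := by
  rintro ⟨x, y⟩ h h'
  simp_all [Prod.ext_iff]

lemma zero_mem_defectSet_ne_zero (s t : ℕ) : 0 ∈ defectSet {0}ᶜ (s, t) := by
  by_cases h : (s, t) = 0
  · exact ⟨[], by simp, h.symm, rfl⟩
  · exact singleton_mem_defectSet h

lemma Icc_subset_defectSet_diag {y : ℕ}
    (ih : Set.Icc (Nat.gcd (y + 1) y : ℤ) ((y + 1 : ℕ) * y) ⊆ defectSet {0}ᶜ (y + 1, y)) :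
    Set.Icc (Nat.gcd (y + 1) (y + 1) : ℤ) ((y + 1 : ℕ) * (y + 1 : ℕ)) ⊆
      defectSet {0}ᶜ (y + 1, y + 1) := by
  rintro d ⟨hd₁, hd₂⟩
  rw [Nat.gcd_self] at hd₁
  have hgcd : Nat.gcd (y + 1) y = 1 := by simp
  have hrest : d - (y + 1) ∈ defectSet {0}ᶜ (y + 1, y) := by
    rcases hd₁.eq_or_lt with rfl | hlt
    · simpa using zero_mem_defectSet_ne_zero (y + 1) y
    · refine ih ⟨?_, ?_⟩
      · rw [hgcd]; push_cast at hlt ⊢; linarith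
      · push_cast at hd₂ ⊢; linarith
  simpa using add_vertical_mem_defectSet (w := 1) (by simp) hrest

/-- Placing a horizontal unit edge first misses the defect `y + 3` when `y` is even; it comes from
the edges `(2, 1)` and `(y - 1, y + 1)`. -/
lemma Icc_subset_defectSet_succ {y : ℕ}
    (ih : Set.Icc (Nat.gcd y (y + 2) : ℤ) (y * (y + 2 : ℕ)) ⊆ defectSet {0}ᶜ (y, y + 2)) :
    Set.Icc (Nat.gcd (y + 1) (y + 2) : ℤ) ((y + 1 : ℕ) * (y + 2 : ℕ)) ⊆
      defectSet {0}ᶜ (y + 1, y + 2) := by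
  rintro d ⟨hd₁, hd₂⟩
  have hcoprime : Nat.gcd (y + 1) (y + 2) = 1 :=
    (Nat.coprime_self_add_right (n := 1)).2 (Nat.coprime_one_right _)
  rw [hcoprime] at hd₁
  obtain hle | rfl | rfl | hlt : d ≤ y + 1 ∨ d = y + 2 ∨ d = y + 3 ∨ y + 4 ≤ d := by omega
  · lift d to ℕ using by omega
    obtain ⟨a, ha⟩ := Nat.exists_eq_add_of_le (show d ≤ y + 1 by omega)
    have hdet : |latticeDet (d, d) (a, a + 1)| = d := by
      rw [show latticeDet (d, d) (a, a + 1) = d by simp only [latticeDet]; push_cast; ring,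
        Nat.abs_cast]
    exact pair_mem_defectSet (by simp; omega) (by simp) (by omega) (by omega) hdet
  · simpa using add_horizontal_mem_defectSet (w := 1) (by simp)
      (zero_mem_defectSet_ne_zero y (y + 2))
  · obtain ⟨z, rfl⟩ : ∃ z, y = z + 1 := ⟨y - 1, by rcases y with _ | y <;> simp at hd₂ ⊢⟩
    refine pair_mem_defectSet (e := (2, 1)) (f := (z, z + 2)) (by simp) (by simp) (by omega)
      (by omega) ?_
    rw [show latticeDet (2, 1) (z, z + 2) = (z + 4 : ℕ) by
      simp only [latticeDet]; push_cast; ring, Nat.abs_cast]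
    push_cast
    ring
  · have hgcd : Nat.gcd y (y + 2) ≤ 2 :=
      Nat.le_of_dvd two_pos (by simpa using Nat.gcd_dvd_right y 2)
    have hrest : d - (y + 2) ∈ defectSet {0}ᶜ (y, y + 2) :=
      ih ⟨by omega, by push_cast at hd₂ ⊢; linarith⟩
    simpa using add_horizontal_mem_defectSet (w := 1) (by simp) hrest

lemma Icc_subset_defectSet_add {s x : ℕ} (hs : 0 < s)
    (hshear : Set.Icc (Nat.gcd s (x + 2) : ℤ) (s * (x + 2 : ℕ)) ⊆ defectSet {0}ᶜ (s, x + 2))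
    (hedge : Set.Icc (Nat.gcd s (s + (x + 1)) : ℤ) (s * (s + (x + 1) : ℕ)) ⊆
      defectSet {0}ᶜ (s, s + (x + 1))) :
    Set.Icc (Nat.gcd s (s + (x + 2)) : ℤ) (s * (s + (x + 2) : ℕ)) ⊆
      defectSet {0}ᶜ (s, s + (x + 2)) := by
  rintro d ⟨hd₁, hd₂⟩
  rcases le_or_gt d (s * (x + 2 : ℕ)) with hle | hlt
  · rw [Nat.gcd_self_add_right] at hd₁
    simpa [add_comm] using shear_mem_defectSet 1 (mapsTo_shear_ne_zero 1) (hshear ⟨hd₁, hle⟩)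
  · have hgcd : (Nat.gcd s (s + (x + 1)) : ℤ) ≤ s := mod_cast Nat.gcd_le_left _ hs
    have hrest : d - s ∈ defectSet {0}ᶜ (s, s + (x + 1)) := by
      refine hedge ⟨?_, ?_⟩ <;> push_cast at hlt hd₂ ⊢ <;> nlinarith
    simpa [add_assoc] using add_vertical_mem_defectSet (w := 1) (by simp) hrest

theorem Icc_subset_defectSet_ne_zero (s t : ℕ) :
    Set.Icc (Nat.gcd s t : ℤ) (s * t) ⊆ defectSet {0}ᶜ (s, t) := by
  induction hN : s + t using Nat.strong_induction_on generalizing s t with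
  | _ N ih =>
    subst hN
    wlog hst : s ≤ t generalizing s t
    · have hts := this t s (fun m hm a b hab => ih m (by omega) a b hab) (by omega)
      rw [Nat.gcd_comm, mul_comm]
      exact hts.trans fun d hd =>
        swap_mem_defectSet (A := {0}ᶜ) (fun e he h => he (Prod.swap_injective h)) hd
    obtain ⟨x, rfl⟩ := Nat.exists_eq_add_of_le hst
    rcases Nat.eq_zero_or_pos s with rfl | hs
    · rintro d ⟨hd₁, hd₂⟩
      obtain rfl : d = 0 := by simp at hd₁ hd₂; omega
      exact zero_mem_defectSet_ne_zero _ _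
    obtain ⟨y, rfl⟩ : ∃ y, s = y + 1 := ⟨s - 1, by omega⟩
    match x with
    | 0 => exact Icc_subset_defectSet_diag (ih _ (by omega) _ _ rfl)
    | 1 => exact Icc_subset_defectSet_succ (ih _ (by omega) _ _ rfl)
    | x + 2 =>
      exact Icc_subset_defectSet_add hs (ih _ (by omega) _ _ rfl) (ih _ (by omega) _ _ rfl)

/-- The defects of polygons inside the triangle with legs `s` and `t`. Those between `0` and
`gcd s t` do not occur: an edge `e` that is not parallel to the hypotenuse makes the defect at
least `|latticeDet e (s, t)|`, which is a multiple of `gcd s t`. -/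
def defectRange (s t : ℕ) : Set ℤ := insert 0 (Set.Icc (Nat.gcd s t : ℤ) (s * t))

theorem defectRange_subset_defectSet (s t : ℕ) : defectRange s t ⊆ defectSet {0}ᶜ (s, t) :=
  Set.insert_subset (zero_mem_defectSet_ne_zero s t) (Icc_subset_defectSet_ne_zero s t)

end NonzeroEdges

/-! ### Newton numbers of polygons in a box -/

section Staircase

/-- The edges of strictly negative finite slope, which are the possible compact edges of a Newton
polygon. -/
def slopedEdges : Set (ℕ × ℕ) := {e | 0 < e.1 ∧ 0 < e.2}

/-- `n` is the Newton number of a convex lattice polygon joining `(0, V)` to `(U, 0)`, for some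
`U ≤ p` and `V ≤ q`. -/
def PolygonAttainable (p q : ℕ) (n : ℤ) : Prop :=
  ∃ (U V : ℕ) (d : ℤ), U ≤ p ∧ V ≤ q ∧ d ∈ defectSet slopedEdges (U, V) ∧
    n = ((U : ℤ) - 1) * ((V : ℤ) - 1) - d

variable {d n : ℤ} {s t : ℕ}

lemma shear_swap_mem_defectSet (hd : d ∈ defectSet {0}ᶜ (s, t)) :
    d ∈ defectSet {e | 0 < e.1} (s + t, s) := by
  have hswap : Set.MapsTo Prod.swap {e : ℕ × ℕ | 0 < e.2} {e | 0 < e.1} := fun _ he => he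
  have hshear : Set.MapsTo (shear 1) {0}ᶜ {e | 0 < e.2} := by
    rintro ⟨x, y⟩ h
    simp only [Set.mem_compl_iff, Set.mem_singleton_iff, Prod.mk_eq_zero] at h
    simp only [shear_apply, Set.mem_ofPred_eq]
    omega
  simpa [add_comm] using swap_mem_defectSet hswap (shear_mem_defectSet 1 hshear hd)

lemma shear_mem_defectSet_slopedEdges {c : ℕ} (hc : 0 < c)
    (hd : d ∈ defectSet {e | 0 < e.1} (s, t)) : d ∈ defectSet slopedEdges (s, t + c * s) :=
  shear_mem_defectSet c (fun e (he : 0 < e.1) => ⟨he, by simp only [shear_apply]; positivity⟩) hd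

namespace PolygonAttainable

variable {p q r k w : ℕ}

lemma mono {p' q' : ℕ} (h : PolygonAttainable p q n) (hp : p ≤ p') (hq : q ≤ q') :
    PolygonAttainable p' q' n := by
  obtain ⟨U, V, d, hU, hV, h⟩ := h
  exact ⟨U, V, d, hU.trans hp, hV.trans hq, h⟩

/-- The corner formed by `r` edges `(1, k + 1)` and `t` edges `(1, k)` is the image of a coordinate
triangle with legs `r` and `t` under a unimodular map, and `d` is carved out of that triangle. -/
lemma of_two_slopes (r t : ℕ) (hk : 0 < k) (hd : d ∈ defectRange r t) (hp : r + t ≤ p)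
    (hq : r + k * (r + t) ≤ q)
    (hn : n = ((r : ℤ) + t - 1) * ((r : ℤ) + k * (r + t) - 1) - d) : PolygonAttainable p q n := by
  refine ⟨r + t, r + k * (r + t), d, hp, hq, ?_, by rw [hn]; push_cast; ring⟩
  exact shear_mem_defectSet_slopedEdges hk
    (shear_swap_mem_defectSet (defectRange_subset_defectSet r t hd))

/-- The same corner with slopes `k + 2` and `k + 1`, followed by the edge `(w, k w)`. -/
lemma of_two_slopes_add_edge (r t : ℕ) (hk : 0 < k) (hw : 0 < w) (hd : d ∈ defectRange r t)
    (hp : r + t + w ≤ p) (hq : r + (r + t) + k * (r + t + w) ≤ q)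
    (hn : n = ((r : ℤ) + t + w - 1) * ((r : ℤ) + (r + t) + k * (r + t + w) - 1)
      - d - w * (r + (r + t))) : PolygonAttainable p q n := by
  have hcorner : d ∈ defectSet {e | 0 < e.1} (r + t, r + 1 * (r + t)) :=
    shear_mem_defectSet 1 (fun e he => he)
      (shear_swap_mem_defectSet (defectRange_subset_defectSet r t hd))
  rw [one_mul] at hcorner
  exact ⟨_, _, _, hp, hq,
    shear_mem_defectSet_slopedEdges hk (add_horizontal_mem_defectSet (w := w) hw hcorner),
    by rw [hn]; push_cast; ring⟩

/-- Below `ν (r + t, k (r + t) + r)`, each corner with `r` steep edges leaves no gap to the next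
one with `r - 1`, except when `t = 1` and `r` is odd. -/
lemma sub_of_le (hk : 0 < k) (ht : 0 < t) {D : ℤ} (hgcd : D = 0 ∨ (Nat.gcd r t : ℤ) ≤ D)
    (hD : D ≤ r * (r + t - 1)) (hex : ¬(t = 1 ∧ Odd r ∧ D = r + 1)) :
    PolygonAttainable (r + t) (k * (r + t) + r)
      (((r : ℤ) + t - 1) * (k * (r + t) + r - 1) - D) := by
  induction r generalizing t D with
  | zero =>
    obtain rfl : D = 0 := hgcd.resolve_right fun h => by simp at h hD; omega
    exact of_two_slopes 0 t hk (Set.mem_insert _ _) le_rfl (by omega) (by push_cast; ring)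
  | succ r ih =>
    rcases le_or_gt D ((r + 1 : ℕ) * t) with hle | hlt
    · exact of_two_slopes (r + 1) t hk (hgcd.imp_right fun h => ⟨h, hle⟩) le_rfl (by omega)
        (by push_cast; ring)
    have hnext : PolygonAttainable (r + (t + 1)) (k * (r + (t + 1)) + r)
        (((r : ℤ) + (t + 1 : ℕ) - 1) * (k * (r + (t + 1 : ℕ)) + r - 1) - (D - (r + t))) := by
      have hr : 0 < r := by
        by_contra h
        obtain rfl : r = 0 := by omega
        simp at hlt hD
        omega
      push_cast at hlt hD hex
      refine ih t.succ_pos (Or.inr ?_) (by push_cast; linarith) (by omega)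
      obtain rfl | ht2 : t = 1 ∨ 2 ≤ t := by omega
      · rcases Nat.even_or_odd r with heven | hodd
        · have hle : (Nat.gcd r 2 : ℤ) ≤ 2 := mod_cast Nat.gcd_le_right _ two_pos
          have hne : D ≠ r + 1 + 1 := fun h => hex ⟨rfl, heven.add_one, h⟩
          push_cast at hlt ⊢
          omega
        · rw [show Nat.gcd r (1 + 1) = 1 from Nat.coprime_two_right.2 hodd]
          push_cast at hlt ⊢
          linarith
      · have hle : (Nat.gcd r (t + 1) : ℤ) ≤ r := mod_cast Nat.gcd_le_left _ hr
        nlinarith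
    have hshift : ((r : ℤ) + (t + 1 : ℕ) - 1) * (k * (r + (t + 1 : ℕ)) + r - 1) - (D - (r + t)) =
        (((r + 1 : ℕ) : ℤ) + t - 1) * (k * ((r + 1 : ℕ) + t) + (r + 1 : ℕ) - 1) - D := by
      push_cast; ring
    rw [hshift, show r + (t + 1) = r + 1 + t by omega] at hnext
    exact hnext.mono le_rfl (by omega)

lemma sq_sub {m : ℕ} (hm : 2 ≤ m) {t : ℤ} (ht : 1 ≤ t) (htm : t ≤ 2 * m - 3)
    (hex : ¬(t = 2 ∧ Even m)) : PolygonAttainable m (m + 2) ((m : ℤ) ^ 2 - t) := by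
  obtain ⟨b, rfl⟩ := Nat.exists_eq_add_of_le hm
  push_cast at htm
  have hd : t - 1 ∈ defectRange 2 b := by
    rcases ht.eq_or_lt with rfl | hlt
    · exact Set.mem_insert _ _
    refine Or.inr ⟨?_, by push_cast; linarith⟩
    rcases Nat.even_or_odd b with heven | hodd
    · have hle : (Nat.gcd 2 b : ℤ) ≤ 2 := mod_cast Nat.gcd_le_left _ two_pos
      have hne : t ≠ 2 := fun h => hex ⟨h, even_two.add heven⟩
      omega
    · rw [show Nat.gcd 2 b = 1 from Nat.coprime_two_left.2 hodd]
      push_cast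
      linarith
  exact of_two_slopes 2 b one_pos hd le_rfl (by omega) (by push_cast; ring)

/-- The defect `2` that `sq_sub` misses. -/
lemma sq_sub_two {m : ℕ} (hm : 4 ≤ m) : PolygonAttainable m (m + 4) ((m : ℤ) ^ 2 - 2) := by
  obtain ⟨b, rfl⟩ := Nat.exists_eq_add_of_le hm
  rcases Nat.eq_zero_or_pos b with rfl | hb
  · exact of_two_slopes 2 1 two_pos (Set.mem_insert _ _) (by norm_num) (by norm_num) (by norm_num)
  have hgcd : (Nat.gcd 3 (b + 1) : ℤ) ≤ 3 := mod_cast Nat.gcd_le_left _ three_pos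
  exact of_two_slopes 3 (b + 1) one_pos (d := b + 4)
    (Or.inr ⟨by omega, by push_cast; linarith⟩) (by omega) (by omega) (by push_cast; ring)

lemma of_sq_le {m : ℕ} (hn₁ : (m : ℤ) ^ 2 ≤ n) (hn₂ : n ≤ (m + 1) * m) :
    PolygonAttainable (m + 1) (m + 2) n := by
  have hd : (m + 1) * m - n ∈ defectRange 1 m := by
    rcases hn₂.eq_or_lt with rfl | hlt
    · exact Or.inl (sub_self _)
    · refine Or.inr ⟨?_, by push_cast; linarith⟩
      rw [Nat.gcd_one_left]
      push_cast
      linarith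
  exact of_two_slopes 1 m one_pos hd (by omega) (by omega) (by push_cast; ring)

/-- Consecutive intervals `of_sq_le` leave gaps just below the squares, where the corners with two
edges of slope `2` (`sq_sub`) take over. -/
lemma of_le_mul_sub_two {p : ℕ} (hp : 3 ≤ p) (hn₁ : 1 ≤ n) (hn₂ : n ≤ ((p : ℤ) - 1) * (p - 2))
    (hex : ¬(Even p ∧ n = ((p : ℤ) - 1) ^ 2 - (2 * p - 1))) : PolygonAttainable p (p + 1) n := by
  have h_two : PolygonAttainable 2 3 2 := of_sq_le (m := 1) (by norm_num) (by norm_num)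
  induction p, hp using Nat.le_induction with
  | base =>
    obtain rfl | rfl : n = 1 ∨ n = 2 := by push_cast at hn₂; omega
    · have h_one : PolygonAttainable 2 3 1 := of_sq_le (m := 1) (by norm_num) (by norm_num)
      exact h_one.mono (by norm_num) (by norm_num)
    · exact h_two.mono (by norm_num) (by norm_num)
  | succ a ha ih =>
    obtain ⟨m, rfl⟩ : ∃ m, a = m + 1 := ⟨a - 1, by omega⟩
    push_cast at hn₂ hex ih
    rcases le_or_gt ((m : ℤ) ^ 2) n with hge | hlt
    · exact (of_sq_le hge (by linarith)).mono (by omega) (by omega)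
    rcases lt_or_ge ((m : ℤ) ^ 2 - m) n with hgap | hle
    · have hgap_ex : ¬((m : ℤ) ^ 2 - n = 2 ∧ Even m) := fun ⟨_, heven⟩ =>
        hex ⟨heven.add even_two, by linarith⟩
      have hcorner := sq_sub (m := m) (by omega) (by linarith) (by linarith) hgap_ex
      rw [sub_sub_cancel] at hcorner
      exact hcorner.mono (by omega) (by omega)
    by_cases hprev : Even (m + 1) ∧ n = ((m + 1 : ℤ) - 1) ^ 2 - (2 * (m + 1) - 1)
    · obtain ⟨heven, rfl⟩ := hprev
      obtain ⟨c, rfl⟩ : ∃ c, m = c + 1 := ⟨m - 1, by omega⟩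
      obtain rfl | hc : c = 2 ∨ 4 ≤ c := by
        rw [Nat.even_iff] at heven
        omega
      · exact h_two.mono (by norm_num) (by norm_num)
      · have hsq := (sq_sub_two hc).mono (p' := c + 3) (q' := c + 4) (by omega) (by omega)
        convert hsq using 1
        push_cast
        ring
    · exact (ih (by linarith) hprev).mono (by omega) (by omega)

lemma sub_of_gap_of_one {p : ℕ} (hp : 5 ≤ p) {t : ℤ}
    (ht : (1 ≤ t ∧ t ≤ p - 2) ∨ (Even p ∧ t = 2 * p - 1)) :
    PolygonAttainable p (2 * p + 1) (((p : ℤ) - 1) * (p - 1) - t) := by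
  obtain ⟨m, rfl⟩ : ∃ m, p = m + 1 := ⟨p - 1, by omega⟩
  push_cast at ht ⊢
  rcases ht with ⟨ht₁, ht₂⟩ | ⟨heven, rfl⟩
  · by_cases hex : t = 2 ∧ Even m
    · convert (sq_sub_two (m := m) (by omega)).mono (p' := m + 1) (q' := 2 * (m + 1) + 1)
        (by omega) (by omega) using 1
      rw [hex.1]
      ring
    · convert (sq_sub (m := m) (by omega) ht₁ (by omega) hex).mono (p' := m + 1)
        (q' := 2 * (m + 1) + 1) (by omega) (by omega) using 1
      ring
  · obtain ⟨b, rfl⟩ : ∃ b, m = b + 1 := ⟨m - 1, by omega⟩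
    rw [Nat.even_iff] at heven
    convert (sq_sub_two (m := b) (by omega)).mono (p' := b + 1 + 1) (q' := 2 * (b + 1 + 1) + 1)
      (by omega) (by omega) using 1
    push_cast
    ring

lemma sub_of_gap_of_two_le {b c : ℕ} (hc : 0 < c) {t : ℤ}
    (ht : (1 ≤ t ∧ t ≤ b + 3) ∨ (Odd b ∧ t = 2 * b + 9)) :
    PolygonAttainable (b + 5) ((c + 2) * (b + 5) + 1)
      (((b : ℤ) + 4) * ((c + 1) * (b + 5) - 1) - t) := by
  rcases ht with ⟨ht₁, ht₂⟩ | ⟨hodd, rfl⟩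
  · obtain rfl | rfl | htwo : t = 1 ∨ t = 3 ∨ t = 2 ∨ 4 ≤ t := by omega
    · have hgcd : (Nat.gcd 3 (b + 1) : ℤ) ≤ b + 1 := mod_cast Nat.gcd_le_right _ b.succ_pos
      exact of_two_slopes_add_edge 3 (b + 1) (w := 1) (d := b + 2) hc one_pos
        (Or.inr ⟨by linarith, by push_cast; linarith⟩) (by omega) (by nlinarith)
        (by push_cast; ring)
    · have hdet : |latticeDet (2, 1) (b + 3, b + 5)| = (b + 7 : ℕ) := by
        rw [show latticeDet (2, 1) (b + 3, b + 5) = (b + 7 : ℕ) by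
          simp only [latticeDet]; push_cast; ring, Nat.abs_cast]
      have hpair : ((b + 7 : ℕ) : ℤ) ∈ defectSet {e | 0 < e.1} (b + 5, b + 6) :=
        pair_mem_defectSet (by simp) (by simp) (by omega) (by omega) hdet
      exact ⟨b + 5, b + 6 + c * (b + 5), _, le_rfl, by nlinarith,
        shear_mem_defectSet_slopedEdges hc hpair, by push_cast; ring⟩
    · have hgcd : (Nat.gcd 2 (b + 2) : ℤ) ≤ 2 := mod_cast Nat.gcd_le_left _ two_pos
      have hd : t - 2 ∈ defectRange 2 (b + 2) :=
        htwo.imp (fun h => by rw [h]; rfl) fun h => ⟨by omega, by push_cast; linarith⟩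
      exact of_two_slopes_add_edge 2 (b + 2) (w := 1) hc one_pos hd (by omega) (by nlinarith)
        (by push_cast; ring)
  · have hgcd : (Nat.gcd 3 b : ℤ) ≤ b := mod_cast Nat.gcd_le_right _ hodd.pos
    have hb : (1 : ℤ) ≤ b := mod_cast hodd.pos
    exact of_two_slopes_add_edge 3 b (w := 2) (d := b + 1) hc two_pos
      (Or.inr ⟨by linarith, by push_cast; linarith⟩) (by omega) (by nlinarith)
      (by push_cast; ring)

/-- Here `t` is such that `ν' - t` is an exceptional value for `ν' = (p - 1) (k p - 1)`; it is
reached below the next value of `k`. -/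
lemma sub_of_gap {p k : ℕ} (hp : 5 ≤ p) (hk : 0 < k) {t : ℤ}
    (ht : (1 ≤ t ∧ t ≤ p - 2) ∨ (Even p ∧ t = 2 * p - 1)) :
    PolygonAttainable p ((k + 1) * p + 1) (((p : ℤ) - 1) * (k * p - 1) - t) := by
  obtain rfl | ⟨c, hc, rfl⟩ : k = 1 ∨ ∃ c, 0 < c ∧ k = c + 1 := by
    rcases Nat.lt_or_ge 1 k with h | h
    · exact Or.inr ⟨k - 1, by omega, by omega⟩
    · exact Or.inl (by omega)
  · simpa using sub_of_gap_of_one hp ht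
  · obtain ⟨b, rfl⟩ : ∃ b, p = b + 5 := ⟨p - 5, by omega⟩
    push_cast at ht
    have hb : (1 ≤ t ∧ t ≤ b + 3) ∨ (Odd b ∧ t = 2 * b + 9) := by
      refine ht.imp (fun h => by omega) fun ⟨heven, h⟩ => ⟨?_, by omega⟩
      rw [Nat.even_iff] at heven
      rw [Nat.odd_iff]
      omega
    convert sub_of_gap_of_two_le hc hb using 1
    push_cast
    ring

lemma of_mul_sub_one_le {p k : ℕ} (hp : 0 < p) (hk : 0 < k)
    (hn₁ : ((p : ℤ) - 1) * (k * p - 1) ≤ n)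
    (hn₂ : n ≤ ((p : ℤ) - 1) * ((k + 1) * p - 1) - (p - 1))
    (hex : ¬(Even p ∧ n = ((p : ℤ) - 1) * ((k + 1) * p - 1) - (2 * p - 1))) :
    PolygonAttainable p ((k + 1) * p) n := by
  obtain ⟨r, rfl⟩ : ∃ r, p = r + 1 := ⟨p - 1, by omega⟩
  push_cast at hn₁ hn₂ hex
  have hgcd : (r : ℤ) * (k * (r + 1) + r - 1) - n = 0 ∨
      (Nat.gcd r 1 : ℤ) ≤ r * (k * (r + 1) + r - 1) - n := by
    rcases hn₂.eq_or_lt with rfl | hlt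
    · exact Or.inl (by ring)
    · exact Or.inr (by rw [Nat.gcd_one_right]; push_cast; linarith)
  have hcorner := sub_of_le hk one_pos hgcd (by push_cast; linarith)
    (fun ⟨_, hodd, _⟩ => hex ⟨hodd.add_one, by linarith⟩)
  convert hcorner.mono (p' := r + 1) (q' := (k + 1) * (r + 1)) le_rfl (by nlinarith) using 1
  push_cast
  ring

lemma of_le_sub {p k : ℕ} (hp : 5 ≤ p) (hk : 0 < k) (hn₁ : 1 ≤ n)
    (hn₂ : n ≤ ((p : ℤ) - 1) * (k * p - 1) - (p - 1))
    (hex : ¬(Even p ∧ n = ((p : ℤ) - 1) * (k * p - 1) - (2 * p - 1))) :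
    PolygonAttainable p (k * p + 1) n := by
  induction k, hk using Nat.le_induction with
  | base =>
    push_cast at hn₂ hex
    rw [one_mul] at hn₂ hex
    rw [Nat.succ_eq_add_one, zero_add, one_mul]
    exact of_le_mul_sub_two (by omega) hn₁ (by linarith) (by rwa [sq])
  | succ k hk ih =>
    by_cases hgap : (1 ≤ ((p : ℤ) - 1) * (k * p - 1) - n ∧
        ((p : ℤ) - 1) * (k * p - 1) - n ≤ p - 2) ∨
        (Even p ∧ ((p : ℤ) - 1) * (k * p - 1) - n = 2 * p - 1)
    · simpa using sub_of_gap hp hk hgap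
    push_cast at hn₂ hex
    rcases le_or_gt (((p : ℤ) - 1) * (k * p - 1)) n with hle | hlt
    · exact (of_mul_sub_one_le (by omega) hk hle hn₂ hex).mono le_rfl (Nat.le_succ _)
    · push Not at hgap
      have hn : n ≤ ((p : ℤ) - 1) * (k * p - 1) - (p - 1) := by
        have := hgap.1 (by linarith)
        linarith
      have hne : ¬(Even p ∧ n = ((p : ℤ) - 1) * (k * p - 1) - (2 * p - 1)) := fun ⟨heven, _⟩ =>
        hgap.2 heven (by linarith)
      exact (ih hn hne).mono le_rfl (by nlinarith)

end PolygonAttainable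
end Staircase

/-! ### The area below a polygon -/

section RegionBelow

lemma measure_prod_region_between_co {α : Type*} [MeasurableSpace α] {μ : Measure α} [SFinite μ]
    {s : Set α} {f g : α → ℝ} (hs : MeasurableSet s) (hf : Measurable f) (hg : Measurable g) :
    μ.prod volume {z | z.1 ∈ s ∧ z.2 ∈ Set.Ico (f z.1) (g z.1)} =
      ∫⁻ x in s, ENNReal.ofReal (g x - f x) ∂μ := by
  rw [Measure.prod_apply (measurableSet_region_between_co hf hg hs), ← lintegral_indicator hs]
  refine lintegral_congr fun x => ?_
  by_cases hx : x ∈ s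
  · simp only [Set.preimage_ofPred_eq, hx, true_and, Set.indicator_of_mem]
    exact Real.volume_Ico
  · simp [hx]

/-- The right trapezoid over `[0, u)` whose upper side falls from `(0, b + v)` to `(u, b)`; the
upper and the right side are left out, since they belong to the Newton polyhedron above. -/
def trapezoid (u v b : ℝ) : Set (ℝ × ℝ) :=
  {z | z.1 ∈ Set.Ico 0 u ∧ z.2 ∈ Set.Ico 0 (b + v * (1 - z.1 / u))}

/-- The region between the coordinate axes and the polygon with the edges `E`, in this order from
left to right. -/
def regionBelow : List (ℕ × ℕ) → Set (ℝ × ℝ)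
  | [] => ∅
  | e :: E => trapezoid e.1 e.2 E.sum.2 ∪ (fun z => z - ((e.1 : ℝ), 0)) ⁻¹' regionBelow E

lemma measurableSet_trapezoid (u v b : ℝ) : MeasurableSet (trapezoid u v b) :=
  measurableSet_region_between_co (f := fun _ => 0) (g := fun x => b + v * (1 - x / u))
    measurable_const (by fun_prop) measurableSet_Ico

lemma volume_trapezoid {u v b : ℝ} (hu : 0 ≤ u) (hv : 0 ≤ v) (hb : 0 ≤ b) :
    volume (trapezoid u v b) = ENNReal.ofReal (u * (b + v / 2)) := by
  have hcont : Continuous fun x : ℝ => b + v * (1 - x / u) - 0 := by fun_prop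
  have hnonneg : ∀ x ∈ Set.Ioc 0 u, 0 ≤ b + v * (1 - x / u) - 0 := fun x hx => by
    have := div_le_one_of_le₀ hx.2 hu
    rw [sub_zero]
    exact add_nonneg hb (mul_nonneg hv (by linarith))
  calc volume (trapezoid u v b)
      = ∫⁻ x in Set.Ico 0 u, ENNReal.ofReal (b + v * (1 - x / u) - 0) :=
        measure_prod_region_between_co (f := fun _ => 0) (g := fun x => b + v * (1 - x / u))
          measurableSet_Ico measurable_const (by fun_prop)
    _ = ENNReal.ofReal (∫ x in (0 : ℝ)..u, (b + v * (1 - x / u) - 0)) := by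
        rw [intervalIntegral.integral_of_le hu, ofReal_integral_eq_lintegral_ofReal
          (hcont.integrableOn_Ioc) ((ae_restrict_mem measurableSet_Ioc).mono hnonneg),
          restrict_Ico_eq_restrict_Ioc]
    _ = ENNReal.ofReal (u * (b + v / 2)) := by
        have hlinear : ∀ x : ℝ, b + v * (1 - x / u) - 0 = b + v - v / u * x := fun x => by ring
        simp only [hlinear]
        rw [intervalIntegral.integral_sub intervalIntegrable_const
            (Continuous.intervalIntegrable (by fun_prop) _ _),
          intervalIntegral.integral_const, intervalIntegral.integral_const_mul, integral_id]
        rcases hu.eq_or_lt with rfl | hu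
        · simp
        · congr 1
          rw [smul_eq_mul]
          field_simp
          ring

lemma measurableSet_regionBelow (E : List (ℕ × ℕ)) : MeasurableSet (regionBelow E) := by
  induction E with
  | nil => exact MeasurableSet.empty
  | cons e E ih =>
    exact (measurableSet_trapezoid _ _ _).union (ih.preimage (by fun_prop))

lemma regionBelow_subset_Ici (E : List (ℕ × ℕ)) : regionBelow E ⊆ Set.Ici 0 := by
  induction E with
  | nil => exact Set.empty_subset _
  | cons e E ih =>
    rintro z (⟨hx, hy⟩ | hz)
    · exact ⟨hx.1, hy.1⟩
    · obtain ⟨hx, hy⟩ := ih hz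
      have he : (0 : ℝ) ≤ e.1 := Nat.cast_nonneg _
      simp only [Prod.fst_sub, Prod.snd_sub, Prod.fst_zero, Prod.snd_zero] at hx hy
      exact ⟨by simpa using he.trans (sub_nonneg.1 hx), by simpa using hy⟩

lemma volume_regionBelow_cons (e : ℕ × ℕ) (E : List (ℕ × ℕ)) :
    volume (regionBelow (e :: E)) =
      ENNReal.ofReal (e.1 * (E.sum.2 + e.2 / 2)) + volume (regionBelow E) := by
  have hdisj : Disjoint (trapezoid e.1 e.2 E.sum.2)
      ((fun z => z - ((e.1 : ℝ), 0)) ⁻¹' regionBelow E) := by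
    refine Set.disjoint_left.2 fun z hz hz' => ?_
    have := (regionBelow_subset_Ici E hz').1
    simp only [Prod.fst_sub, Prod.fst_zero, sub_nonneg] at this
    exact absurd hz.1.2 this.not_gt
  rw [regionBelow, measure_union hdisj ((measurableSet_regionBelow E).preimage (by fun_prop)),
    volume_trapezoid (Nat.cast_nonneg _) (Nat.cast_nonneg _) (Nat.cast_nonneg _),
    (measurePreserving_sub_right volume ((e.1 : ℝ), (0 : ℝ))).measure_preimage
      (measurableSet_regionBelow E).nullMeasurableSet]

lemma volume_regionBelow_ne_top (E : List (ℕ × ℕ)) : volume (regionBelow E) ≠ ⊤ := by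
  induction E with
  | nil => simp [regionBelow]
  | cons e E ih =>
    rw [volume_regionBelow_cons]
    exact ENNReal.add_ne_top.2 ⟨ENNReal.ofReal_ne_top, ih⟩

/-- The edges are listed by nonincreasing steepness; from left to right they then form a convex
polygon. -/
def SlopeSorted (E : List (ℕ × ℕ)) : Prop :=
  E.Pairwise fun e f => latticeDet e f ≤ 0

lemma exists_perm_slopeSorted {E : List (ℕ × ℕ)} (hE : ∀ e ∈ E, e ∈ slopedEdges) :
    ∃ F, F.Perm E ∧ SlopeSorted F := by
  let steeper (e f : ℕ × ℕ) : Prop := (f.2 : ℚ) / f.1 ≤ (e.2 : ℚ) / e.1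
  have : Std.Total steeper := ⟨fun _ _ => le_total _ _⟩
  have : IsTrans _ steeper := ⟨fun _ _ _ h₁ h₂ => h₂.trans h₁⟩
  have hperm := List.perm_insertionSort steeper E
  refine ⟨E.insertionSort steeper, hperm,
    (List.pairwise_insertionSort steeper E).imp_of_mem fun {e f} he hf hle => ?_⟩
  have he₀ : (0 : ℚ) < e.1 := mod_cast (hE e (hperm.mem_iff.1 he)).1
  have hf₀ : (0 : ℚ) < f.1 := mod_cast (hE f (hperm.mem_iff.1 hf)).1
  have hmul : (f.2 : ℤ) * e.1 ≤ e.2 * f.1 := mod_cast (div_le_div_iff₀ hf₀ he₀).1 hle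
  rw [latticeDet]
  linarith

theorem two_mul_volume_regionBelow {E : List (ℕ × ℕ)} (hE : SlopeSorted E) :
    2 * (volume (regionBelow E)).toReal = E.sum.1 * E.sum.2 - defect E := by
  induction E with
  | nil => simp [regionBelow, defect]
  | cons e E ih =>
    obtain ⟨hsteep, hE⟩ := List.pairwise_cons.1 hE
    have hnonneg : (0 : ℝ) ≤ e.1 * (E.sum.2 + e.2 / 2) := by positivity
    rw [volume_regionBelow_cons, ENNReal.toReal_add ENNReal.ofReal_ne_top
      (volume_regionBelow_ne_top E), ENNReal.toReal_ofReal hnonneg, mul_add, ih hE, defect,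
      sum_map_abs_latticeDet_of_nonpos hsteep, latticeDet]
    simp only [List.sum_cons, Prod.fst_add, Prod.snd_add]
    push_cast
    ring

lemma mk_zero_mem_regionBelow {E : List (ℕ × ℕ)} (hE : ∀ e ∈ E, e ∈ slopedEdges) {x : ℝ} :
    (x, 0) ∈ regionBelow E ↔ x ∈ Set.Ico 0 (E.sum.1 : ℝ) := by
  induction E generalizing x with
  | nil => simp [regionBelow]
  | cons e E ih =>
    obtain ⟨⟨hu, hv⟩, hE⟩ := List.forall_mem_cons.1 hE
    have hu : (0 : ℝ) < e.1 := mod_cast hu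
    have hv : (0 : ℝ) < e.2 := mod_cast hv
    have htrapezoid : (x, 0) ∈ trapezoid e.1 e.2 E.sum.2 ↔ x ∈ Set.Ico 0 (e.1 : ℝ) := by
      refine ⟨fun h => h.1, fun h => ⟨h, le_rfl, ?_⟩⟩
      have hdiv : x / e.1 < 1 := (div_lt_one hu).2 h.2
      exact add_pos_of_nonneg_of_pos (Nat.cast_nonneg _) (mul_pos hv (sub_pos.2 hdiv))
    have htail : (x, 0) ∈ (fun z => z - ((e.1 : ℝ), 0)) ⁻¹' regionBelow E ↔
        x ∈ Set.Ico (e.1 : ℝ) (e.1 + E.sum.1) := by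
      rw [Set.mem_preimage, Prod.mk_sub_mk, sub_zero, ih hE, Set.mem_Ico, Set.mem_Ico,
        sub_nonneg, sub_lt_iff_lt_add']
    rw [regionBelow, Set.mem_union, htrapezoid, htail, ← Set.mem_union,
      Set.Ico_union_Ico_eq_Ico hu.le (le_add_of_nonneg_right (Nat.cast_nonneg _))]
    simp

lemma zero_mk_mem_regionBelow {E : List (ℕ × ℕ)} (hE : ∀ e ∈ E, e ∈ slopedEdges) {y : ℝ} :
    (0, y) ∈ regionBelow E ↔ y ∈ Set.Ico 0 (E.sum.2 : ℝ) := by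
  rcases E with _ | ⟨e, E⟩
  · simp [regionBelow]
  have hu : (0 : ℝ) < e.1 := mod_cast (hE e List.mem_cons_self).1
  have htail : (0, y) ∉ (fun z => z - ((e.1 : ℝ), 0)) ⁻¹' regionBelow E := fun h => by
    have := (regionBelow_subset_Ici E h).1
    simp only [Prod.mk_sub_mk, zero_sub, Prod.fst_zero, Left.nonneg_neg_iff] at this
    linarith
  rw [regionBelow, Set.mem_union, or_iff_left htail]
  simp [trapezoid, hu, add_comm]

end RegionBelow

/-! ### The Newton polyhedron of a polygon -/

section NewtonPolygon

lemma convex_gammaPlus (T : Finset (ℕ × ℕ)) : Convex ℝ (GammaPlus T) :=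
  (convex_convexHull ℝ _).add (convex_Ici (0 : ℝ × ℝ))

lemma isUpperSet_gammaPlus (T : Finset (ℕ × ℕ)) : IsUpperSet (GammaPlus T) :=
  (isUpperSet_Ici (0 : ℝ × ℝ)).add_left

lemma mem_gammaPlus {T : Finset (ℕ × ℕ)} {v : ℕ × ℕ} (hv : v ∈ T) :
    ((v.1 : ℝ), (v.2 : ℝ)) ∈ GammaPlus T :=
  ⟨_, subset_convexHull ℝ _ ⟨v, hv, rfl⟩, 0, ⟨le_rfl, le_rfl⟩, add_zero _⟩

lemma gammaPlus_subset {T : Finset (ℕ × ℕ)} {G : Set (ℝ × ℝ)} (hG : Convex ℝ G)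
    (hG' : IsUpperSet G) (hT : ∀ v ∈ T, ((v.1 : ℝ), (v.2 : ℝ)) ∈ G) : GammaPlus T ⊆ G := by
  rintro _ ⟨x, hx, y, hy, rfl⟩
  refine hG' (le_add_of_nonneg_right (show 0 ≤ y from hy)) (convexHull_min ?_ hG hx)
  rintro _ ⟨v, hv, rfl⟩
  exact hT v hv

/-- The vertices, from left to right, of the polygon with the edges `E` which ends on the
horizontal axis. -/
def vertices : List (ℕ × ℕ) → List (ℕ × ℕ)
  | [] => [0]
  | e :: E => (0, (e :: E).sum.2) :: (vertices E).map (· + (e.1, 0))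

lemma zero_sum_snd_mem_vertices (E : List (ℕ × ℕ)) : (0, E.sum.2) ∈ vertices E := by
  cases E <;> simp [vertices]

lemma mem_of_notMem_regionBelow {E : List (ℕ × ℕ)} {G : Set (ℝ × ℝ)} (hG : Convex ℝ G)
    (hG' : IsUpperSet G) (hE : ∀ v ∈ vertices E, ((v.1 : ℝ), (v.2 : ℝ)) ∈ G) {z : ℝ × ℝ}
    (hz : 0 ≤ z) (hzE : z ∉ regionBelow E) : z ∈ G := by
  induction E generalizing G z with
  | nil => exact hG' hz (by simpa [vertices, Prod.mk_zero_zero] using hE)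
  | cons e E ih =>
    rw [regionBelow, Set.mem_union, not_or] at hzE
    have htail : ∀ v ∈ vertices E, ((v.1 : ℝ) + e.1, (v.2 : ℝ)) ∈ G := fun v hv => by
      simpa using hE _ (List.mem_cons_of_mem _ (List.mem_map_of_mem hv))
    rcases lt_or_ge z.1 e.1 with hlt | hle
    · have hu : (0 : ℝ) < e.1 := hz.1.trans_lt hlt
      have hleft : ((0 : ℝ), (e.2 + E.sum.2 : ℝ)) ∈ G := by
        simpa using hE _ (zero_sum_snd_mem_vertices (e :: E))
      have hright : ((e.1 : ℝ), (E.sum.2 : ℝ)) ∈ G := by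
        simpa using htail _ (zero_sum_snd_mem_vertices E)
      have habove : E.sum.2 + e.2 * (1 - z.1 / e.1) ≤ z.2 := by
        by_contra! h
        exact hzE.1 ⟨⟨hz.1, hlt⟩, hz.2, h⟩
      have hs : 0 ≤ z.1 / e.1 := div_nonneg hz.1 hu.le
      have hs' : 0 ≤ 1 - z.1 / e.1 := sub_nonneg.2 ((div_le_one hu).2 hlt.le)
      refine hG' ⟨?_, ?_⟩ (hG hleft hright hs' hs (sub_add_cancel _ _))
      · simp [div_mul_cancel₀ _ hu.ne']
      · simp only [Prod.smul_mk, Prod.mk_add_mk, smul_eq_mul]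
        linarith
    · have hshift := ih (G := (· + ((e.1 : ℝ), 0)) ⁻¹' G) (hG.translate_preimage_left _)
        (hG'.preimage fun _ _ h => by gcongr) (fun v hv => by simpa using htail v hv)
        (z := z - ((e.1 : ℝ), 0)) ⟨by simpa using hle, by simpa using hz.2⟩ hzE.2
      simpa using hshift

/-- The minimum of the linear form `α x + β y`, for `α, β ≥ 0`, on the convex polygon with the
edges `E`: the coordinates of a vertex add up the horizontal legs of the edges to its left and the
vertical legs of the edges to its right, and the best vertex gets the cheaper leg of every edge. -/
def supportSum (E : List (ℕ × ℕ)) (α β : ℝ) : ℝ :=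
  (E.map fun e => min (α * e.1) (β * e.2)).sum

/-- The points above all supporting lines of nonpositive slope of the polygon with the edges `E`. -/
def supportPolyhedron (E : List (ℕ × ℕ)) : Set (ℝ × ℝ) :=
  {z | ∀ α β : ℝ, 0 ≤ α → 0 ≤ β → supportSum E α β ≤ α * z.1 + β * z.2}

lemma supportSum_cons (e : ℕ × ℕ) (E : List (ℕ × ℕ)) (α β : ℝ) :
    supportSum (e :: E) α β = min (α * e.1) (β * e.2) + supportSum E α β := by
  simp [supportSum]

lemma supportSum_le_fst (E : List (ℕ × ℕ)) (α β : ℝ) : supportSum E α β ≤ α * E.sum.1 := by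
  induction E with
  | nil => simp [supportSum]
  | cons e E ih =>
    rw [supportSum_cons, List.sum_cons, Prod.fst_add, Nat.cast_add, mul_add]
    exact add_le_add (min_le_left _ _) ih

lemma supportSum_le_snd (E : List (ℕ × ℕ)) (α β : ℝ) : supportSum E α β ≤ β * E.sum.2 := by
  induction E with
  | nil => simp [supportSum]
  | cons e E ih =>
    rw [supportSum_cons, List.sum_cons, Prod.snd_add, Nat.cast_add, mul_add]
    exact add_le_add (min_le_right _ _) ih

lemma supportSum_le_of_mem_vertices {E : List (ℕ × ℕ)} {v : ℕ × ℕ} (hv : v ∈ vertices E)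
    (α β : ℝ) : supportSum E α β ≤ α * v.1 + β * v.2 := by
  induction E generalizing v with
  | nil =>
    obtain rfl : v = 0 := List.mem_singleton.1 hv
    simp [supportSum]
  | cons e E ih =>
    rcases List.mem_cons.1 hv with rfl | hv
    · simpa using supportSum_le_snd (e :: E) α β
    · obtain ⟨w, hw, rfl⟩ := List.mem_map.1 hv
      have := min_le_left (α * (e.1 : ℝ)) (β * e.2)
      have := ih hw
      rw [supportSum_cons]
      simp only [Prod.fst_add, Prod.snd_add, add_zero]
      push_cast
      linarith

lemma convex_supportPolyhedron (E : List (ℕ × ℕ)) : Convex ℝ (supportPolyhedron E) := by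
  intro z hz w hw a b ha hb hab α β hα hβ
  calc supportSum E α β
      = a * supportSum E α β + b * supportSum E α β := by rw [← add_mul, hab, one_mul]
    _ ≤ a * (α * z.1 + β * z.2) + b * (α * w.1 + β * w.2) := by
        gcongr
        exacts [hz α β hα hβ, hw α β hα hβ]
    _ = α * (a • z + b • w).1 + β * (a • z + b • w).2 := by
        simp only [Prod.fst_add, Prod.snd_add, Prod.smul_fst, Prod.smul_snd, smul_eq_mul]
        ring

lemma isUpperSet_supportPolyhedron (E : List (ℕ × ℕ)) : IsUpperSet (supportPolyhedron E) :=
  fun _ _ hzw hz α β hα hβ => (hz α β hα hβ).trans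
    (add_le_add (mul_le_mul_of_nonneg_left hzw.1 hα) (mul_le_mul_of_nonneg_left hzw.2 hβ))

lemma supportSum_of_nonpos {e : ℕ × ℕ} {E : List (ℕ × ℕ)}
    (h : ∀ f ∈ E, latticeDet e f ≤ 0) : supportSum E e.2 e.1 = e.1 * E.sum.2 := by
  induction E with
  | nil => simp [supportSum]
  | cons f E ih =>
    obtain ⟨hf, h⟩ := List.forall_mem_cons.1 h
    have hmin : (e.1 * f.2 : ℝ) ≤ e.2 * f.1 := by
      rw [latticeDet, sub_nonpos] at hf
      exact_mod_cast hf
    rw [supportSum_cons, min_eq_right hmin, ih h, List.sum_cons, Prod.snd_add, Nat.cast_add,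
      mul_add]

lemma exists_lt_supportSum_of_mem_regionBelow {E : List (ℕ × ℕ)} (hE : SlopeSorted E)
    {z : ℝ × ℝ} (hz : z ∈ regionBelow E) :
    ∃ e ∈ E, (e.2 * z.1 + e.1 * z.2 : ℝ) < supportSum E e.2 e.1 := by
  induction E generalizing z with
  | nil => exact absurd hz (Set.notMem_empty z)
  | cons e E ih =>
    obtain ⟨hsteep, hE⟩ := List.pairwise_cons.1 hE
    rcases hz with ⟨⟨hx₀, hxu⟩, -, hy⟩ | hz
    · have hu : (0 : ℝ) < e.1 := hx₀.trans_lt hxu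
      refine ⟨e, List.mem_cons_self, ?_⟩
      calc (e.2 * z.1 + e.1 * z.2 : ℝ)
          < e.2 * z.1 + e.1 * (E.sum.2 + e.2 * (1 - z.1 / e.1)) := by gcongr
        _ = e.2 * e.1 + e.1 * E.sum.2 := by field_simp; ring
        _ = supportSum (e :: E) e.2 e.1 := by
          rw [supportSum_cons, supportSum_of_nonpos hsteep, mul_comm (e.1 : ℝ) e.2, min_self]
    · obtain ⟨f, hf, hlt⟩ := ih hE hz
      have hmin : (f.2 * e.1 : ℝ) ≤ f.1 * e.2 := by
        have := hsteep f hf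
        rw [latticeDet, sub_nonpos] at this
        rw [mul_comm, mul_comm (f.1 : ℝ)]
        exact_mod_cast this
      refine ⟨f, List.mem_cons_of_mem _ hf, ?_⟩
      simp only [Prod.fst_sub, Prod.snd_sub, sub_zero] at hlt
      rw [supportSum_cons, min_eq_left hmin]
      linarith

theorem gammaPlus_eq {E : List (ℕ × ℕ)} {T : Finset (ℕ × ℕ)} (hE : SlopeSorted E)
    (hvertices : ∀ v ∈ vertices E, v ∈ T)
    (hT : ∀ v ∈ T, ((v.1 : ℝ), (v.2 : ℝ)) ∈ supportPolyhedron E) :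
    GammaPlus T = Set.Ici 0 \ regionBelow E := by
  refine Set.Subset.antisymm (fun z hz => ⟨?_, fun hzE => ?_⟩) fun z hz => ?_
  · exact gammaPlus_subset (convex_Ici 0) (isUpperSet_Ici 0)
      (fun v _ => ⟨Nat.cast_nonneg _, Nat.cast_nonneg _⟩) hz
  · obtain ⟨e, -, hlt⟩ := exists_lt_supportSum_of_mem_regionBelow hE hzE
    exact hlt.not_ge (gammaPlus_subset (convex_supportPolyhedron E)
      (isUpperSet_supportPolyhedron E) hT hz _ _ (Nat.cast_nonneg _) (Nat.cast_nonneg _))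
  · exact mem_of_notMem_regionBelow (convex_gammaPlus T) (isUpperSet_gammaPlus T)
      (fun v hv => mem_gammaPlus (hvertices v hv)) hz.1 hz.2

lemma axisA_eq {E : List (ℕ × ℕ)} {T : Finset (ℕ × ℕ)} (hE : ∀ e ∈ E, e ∈ slopedEdges)
    (hT : GammaPlus T = Set.Ici 0 \ regionBelow E) : axisA T = E.sum.1 := by
  have hray : {x : ℝ | (x, 0) ∈ GammaPlus T} = Set.Ici (E.sum.1 : ℝ) := by
    ext x
    simp only [hT, Set.mem_ofPred_eq, Set.mem_sdiff, mk_zero_mem_regionBelow hE, Set.mem_Ici,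
      Set.mem_Ico, Prod.le_def, Prod.fst_zero, Prod.snd_zero, le_refl, and_true]
    refine ⟨fun h => by simpa [h.1] using h.2, fun h => ?_⟩
    exact ⟨(Nat.cast_nonneg _).trans h, fun h' => h'.2.not_ge h⟩
  rw [axisA, hray, csInf_Ici]

lemma axisB_eq {E : List (ℕ × ℕ)} {T : Finset (ℕ × ℕ)} (hE : ∀ e ∈ E, e ∈ slopedEdges)
    (hT : GammaPlus T = Set.Ici 0 \ regionBelow E) : axisB T = E.sum.2 := by
  have hray : {y : ℝ | (0, y) ∈ GammaPlus T} = Set.Ici (E.sum.2 : ℝ) := by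
    ext y
    simp only [hT, Set.mem_ofPred_eq, Set.mem_sdiff, zero_mk_mem_regionBelow hE, Set.mem_Ici,
      Set.mem_Ico, Prod.le_def, Prod.fst_zero, Prod.snd_zero, le_refl, true_and]
    refine ⟨fun h => by simpa [h.1] using h.2, fun h => ?_⟩
    exact ⟨(Nat.cast_nonneg _).trans h, fun h' => h'.2.not_ge h⟩
  rw [axisB, hray, csInf_Ici]

lemma areaS_eq {E : List (ℕ × ℕ)} {T : Finset (ℕ × ℕ)}
    (hT : GammaPlus T = Set.Ici 0 \ regionBelow E) :
    areaS T = (volume (regionBelow E)).toReal := by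
  have hquadrant : {v : ℝ × ℝ | 0 ≤ v.1 ∧ 0 ≤ v.2} = Set.Ici 0 := rfl
  rw [areaS, hquadrant, hT, Set.sdiff_sdiff_cancel_left (regionBelow_subset_Ici E)]

theorem newtonNumber_eq {E : List (ℕ × ℕ)} {T : Finset (ℕ × ℕ)} (hE : SlopeSorted E)
    (hsloped : ∀ e ∈ E, e ∈ slopedEdges) (hvertices : ∀ v ∈ vertices E, v ∈ T)
    (hT : ∀ v ∈ T, ((v.1 : ℝ), (v.2 : ℝ)) ∈ supportPolyhedron E) :
    newtonNumber T = ((E.sum.1 : ℝ) - 1) * (E.sum.2 - 1) - defect E := by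
  have hΓ := gammaPlus_eq hE hvertices hT
  rw [newtonNumber, axisA_eq hsloped hΓ, axisB_eq hsloped hΓ, areaS_eq hΓ,
    two_mul_volume_regionBelow hE]
  ring

theorem PolygonAttainable.attainable {p q : ℕ} {n : ℤ} (h : PolygonAttainable p q n) :
    Attainable {(p, 0), (0, q)} n := by
  obtain ⟨U, V, d, hU, hV, ⟨F, hF, hsum, rfl⟩, rfl⟩ := h
  obtain ⟨E, hperm, hE⟩ := exists_perm_slopeSorted hF
  have hsum' : E.sum = (U, V) := hperm.sum_eq.trans hsum
  refine ⟨(vertices E).toFinset, ?_⟩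
  rw [newtonNumber_eq hE (fun e he => hF e (hperm.mem_iff.1 he)) (fun v hv => by simp [hv]),
    hsum', defect_perm hperm]
  · push_cast
    ring
  · simp only [Finset.mem_union, Finset.mem_insert, Finset.mem_singleton, List.mem_toFinset]
    rintro v ((rfl | rfl) | hv) α β hα hβ
    · have hUp : (E.sum.1 : ℝ) ≤ p := by rw [hsum']; exact_mod_cast hU
      simpa using (supportSum_le_fst E α β).trans (mul_le_mul_of_nonneg_left hUp hα)
    · have hVq : (E.sum.2 : ℝ) ≤ q := by rw [hsum']; exact_mod_cast hV
      simpa using (supportSum_le_snd E α β).trans (mul_le_mul_of_nonneg_left hVq hβ)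
    · exact supportSum_le_of_mem_vertices hv α β

end NewtonPolygon

/-- possible Milnor numbers of deformations of a SQH singularity
with weights `(1/p, 1/q)`, `4 < p < q`, `p ∤ q`. -/
theorem stmt_0 (p q k r m : ℕ) (ν ν' : ℤ)
    (hp : 4 < p) (hpq : p < q) (hnd : ¬ p ∣ q)
    (hk : 1 ≤ k) (hr0 : 0 < r) (hrp : r < p) (hq : q = k * p + r)
    (hm : m = Nat.gcd p q)
    (hν : ν = ((p : ℤ) - 1) * ((q : ℤ) - 1))
    (hν' : ν' = ((p : ℤ) - 1) * ((k : ℤ) * p - 1))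
    (n : ℤ) (hn1 : 1 ≤ n) (hn2 : n ≤ ν)
    (e1 : ¬ (ν - m < n ∧ n < ν))
    (e2 : ¬ (ν' - ((p : ℤ) - 1) < n ∧ n < ν'))
    (e3 : ¬ (Even p ∧ r = p - 1 ∧ n = ν - p))
    (e4 : ¬ (Even p ∧ n = ν' - (2 * (p : ℤ) - 1))) :
    Attainable {(p, 0), (0, q)} n := by
  refine PolygonAttainable.attainable ?_
  rcases lt_or_ge n ν' with hlt | hge
  · have hn : n ≤ ν' - (p - 1) := not_lt.1 fun h => e2 ⟨h, hlt⟩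
    subst hν' hq
    exact (PolygonAttainable.of_le_sub hp hk hn1 hn e4).mono le_rfl (by omega)
  · obtain ⟨t, ht, rfl⟩ : ∃ t, 0 < t ∧ p = r + t := ⟨p - r, by omega, by omega⟩
    have hm : m = Nat.gcd r t := by simp [hm, hq, Nat.gcd_comm]
    have hgcd : ν - n = 0 ∨ (Nat.gcd r t : ℤ) ≤ ν - n := by omega
    have hD : ν - n ≤ r * (r + t - 1) := by
      rw [hν, hq]
      rw [hν'] at hge
      push_cast at hge ⊢
      linarith
    have hex : ¬(t = 1 ∧ Odd r ∧ ν - n = r + 1) := by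
      rintro ⟨rfl, hodd, h⟩
      exact e3 ⟨hodd.add_one, rfl, by push_cast; linarith⟩
    convert PolygonAttainable.sub_of_le hk ht hgcd hD hex using 1
    rw [hν, hq]
    push_cast
    ring
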